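/- Let E be a finite set, let 𝒜 = (A_1, …, A_r) be a family of r subsets of E whose rank (maximum cardinality of a partial transversal) is r, fix i ∈ {1, …, r}, and let e ∈ E ∖ A_i. Then the family (A_1, …, A_{i-1}, A_i ∪ {e}, A_{i+1}, …, A_r) has exactly the same partial transversals as 𝒜 if and only if e belongs to every maximum-cardinality partial transversal of 𝒜 that is contained in E ∖ A_i (i.e., if and only if e is a coloop of the deletion M ∖ A_i of the transversal matroid M = M[𝒜]). -/

import Mathlib

/-- `S` is a partial transversal of the family `A : ι → Set α`: there is an injective map
`f : S → ι` with `s ∈ A (f s)` for all `s ∈ S`. -/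
def IsPartialTransversal {α ι : Type*} (A : ι → Set α) (S : Finset α) : Prop :=
  ∃ f : S → ι, Function.Injective f ∧ ∀ s : S, (s : α) ∈ A (f s)

theorem isPT_iff {α ι : Type*} [Nonempty ι] (A : ι → Set α) (S : Finset α) :
    IsPartialTransversal A S ↔ ∃ f : α → ι, Set.InjOn f S ∧ ∀ s ∈ S, s ∈ A (f s) := by
  classical
  constructor
  · rintro ⟨f, hf, h⟩
    refine ⟨fun x => if hx : x ∈ S then f ⟨x, hx⟩ else Classical.arbitrary ι, ?_, ?_⟩
    · intro x hx y hy hxy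
      have hx' : x ∈ S := hx
      have hy' : y ∈ S := hy
      simp only [hx', hy', dif_pos] at hxy
      exact congrArg Subtype.val (hf hxy)
    · intro s hs
      simp only [hs, dif_pos]
      exact h ⟨s, hs⟩
  · rintro ⟨f, hf, h⟩
    exact ⟨fun s => f s, fun x y hxy => Subtype.ext (hf x.2 y.2 hxy), fun s => h s s.2⟩

open Classical in
theorem hall_violator {α ι : Type*} [Fintype ι] (A : ι → Set α) (S : Finset α)
    (h : ¬ IsPartialTransversal A S) :
    ∃ X ⊆ S, (Finset.univ.filter (fun j => ∃ x ∈ X, x ∈ A j)).card < X.card := by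
  by_contra! hc
  apply h
  have := (Finset.all_card_le_biUnion_card_iff_exists_injective
    (fun s : S => Finset.univ.filter (fun j => (s : α) ∈ A j))).1 (by
      intro s
      have h1 := hc (s.map (Function.Embedding.subtype _)) (by
        intro x hx
        simp only [Finset.mem_map] at hx
        obtain ⟨y, -, rfl⟩ := hx
        exact y.2)
      rw [Finset.card_map] at h1
      refine h1.trans (Finset.card_le_card ?_)
      intro j hj
      simp only [Finset.mem_filter, Finset.mem_univ, true_and, Finset.mem_map,
        Finset.mem_biUnion] at hj ⊢
      obtain ⟨x, ⟨y, hy, rfl⟩, hx⟩ := hj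
      exact ⟨y, hy, hx⟩)
  obtain ⟨f, hf, h2⟩ := this
  exact ⟨f, hf, fun s => by simpa using h2 s⟩

/-- (Bondy–Welsh) Let `A` be a family of `r` subsets of a finite set of rank `r`, let
`i ∈ {1, …, r}` and `e ∉ A i`. Then the family obtained by replacing `A i` with `A i ∪ {e}`
has the same partial transversals as `A` if and only if `e` belongs to every
maximum-cardinality partial transversal of `A` contained in the complement of `A i`
(i.e. `e` is a coloop of `M[A] \ A i`). -/
theorem bondy_welsh_coloop_extension
    {α : Type*} [Fintype α] (r : ℕ) (A : Fin r → Set α)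
    (hex : ∃ B : Finset α, IsPartialTransversal A B ∧ B.card = r)
    (hub : ∀ S : Finset α, IsPartialTransversal A S → S.card ≤ r)
    (i : Fin r) (e : α) (he : e ∉ A i) :
    (∀ S : Finset α,
        IsPartialTransversal (Function.update A i (A i ∪ {e})) S ↔
          IsPartialTransversal A S) ↔
    (∀ S : Finset α, IsPartialTransversal A S → (∀ x ∈ S, x ∉ A i) →
      (∀ T : Finset α, IsPartialTransversal A T → (∀ x ∈ T, x ∉ A i) → T.card ≤ S.card) →
      e ∈ S) := by
  classical
  have : Nonempty (Fin r) := ⟨i⟩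
  have hsub : ∀ j, A j ⊆ Function.update A i (A i ∪ {e}) j := by
    intro j x hx
    by_cases hj : j = i
    · subst hj; simp [hx]
    · simpa [hj] using hx
  constructor
  · intro H S hS hSA hmax
    by_contra heS
    have hins : IsPartialTransversal A (insert e S) := by
      rw [← H, isPT_iff]
      obtain ⟨f, hf, h⟩ := (isPT_iff A S).1 hS
      have hfi : ∀ x ∈ S, f x ≠ i := fun x hx hxi => hSA x hx (hxi ▸ h x hx)
      have hne : ∀ x ∈ S, x ≠ e := fun x hx hxe => heS (hxe ▸ hx)
      refine ⟨Function.update f e i, ?_, ?_⟩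
      · intro x hx y hy hxy
        simp only [Finset.coe_insert, Set.mem_insert_iff, Finset.mem_coe] at hx hy
        rcases hx with rfl | hx <;> rcases hy with rfl | hy
        · rfl
        · simp [hne y hy] at hxy
          exact absurd hxy.symm (hfi y hy)
        · simp [hne x hx] at hxy
          exact absurd hxy (hfi x hx)
        · simp [hne x hx, hne y hy] at hxy
          exact hf hx hy hxy
      · intro s hs
        rcases Finset.mem_insert.1 hs with rfl | hs
        · simp
        · apply hsub
          simpa [hne s hs] using h s hs
    have := hmax _ hins (by
      intro x hx
      rcases Finset.mem_insert.1 hx with rfl | hx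
      · exact he
      · exact hSA x hx)
    rw [Finset.card_insert_of_notMem heS] at this
    omega
  · intro H S
    constructor
    swap
    · rintro ⟨f, hf, h⟩
      exact ⟨f, hf, fun s => hsub _ (h s)⟩
    intro hS
    by_contra hnot
    obtain ⟨f, hf, h⟩ := (isPT_iff _ S).1 hS
    obtain ⟨X, hXS, hX⟩ := hall_violator A S hnot
    set N := Finset.univ.filter (fun j => ∃ x ∈ X, x ∈ A j) with hN
    have hmem : ∀ x ∈ S, x ≠ e → x ∈ A (f x) := by
      intro x hx hxe
      have := h x hx
      by_cases hj : f x = i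
      · rw [hj] at this ⊢
        simpa [hxe] using this
      · simpa [hj] using this
    have hinj : Set.InjOn f (X : Set α) := hf.mono (by exact_mod_cast hXS)
    have hsubN : (X.erase e).image f ⊆ N := by
      intro j hj
      obtain ⟨x, hx, rfl⟩ := Finset.mem_image.1 hj
      have hx' := Finset.mem_erase.1 hx
      simp only [hN, Finset.mem_filter, Finset.mem_univ, true_and]
      exact ⟨x, hx'.2, hmem x (hXS hx'.2) hx'.1⟩
    have hcardE : ((X.erase e).image f).card = (X.erase e).card :=
      Finset.card_image_of_injOn (hinj.mono (by simp))
    have heX : e ∈ X := by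
      by_contra hc
      rw [Finset.erase_eq_of_notMem hc] at hcardE hsubN
      have := Finset.card_le_card hsubN
      omega
    have hce : (X.erase e).card = X.card - 1 := Finset.card_erase_of_mem heX
    have hNeq : (X.erase e).image f = N := Finset.eq_of_subset_of_card_le hsubN (by omega)
    have hfe : f e = i := by
      by_contra hc
      have h1 : e ∈ A (f e) := by simpa [hc] using h e (hXS heX)
      have h2 : f e ∈ N := by
        simp only [hN, Finset.mem_filter, Finset.mem_univ, true_and]
        exact ⟨e, heX, h1⟩
      rw [← hNeq] at h2
      obtain ⟨x, hx, hxe⟩ := Finset.mem_image.1 h2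
      have hx' := Finset.mem_erase.1 hx
      exact hx'.1 (hinj hx'.2 heX hxe)
    have hiN : i ∉ N := by
      rw [← hNeq]
      intro h2
      obtain ⟨x, hx, hxe⟩ := Finset.mem_image.1 h2
      have hx' := Finset.mem_erase.1 hx
      exact hx'.1 (hinj hx'.2 heX (hxe.trans hfe.symm))
    have hout : ∀ j, j ∉ N → ∀ x ∈ X, x ∉ A j := by
      intro j hj x hx hxA
      exact hj (by
        simp only [hN, Finset.mem_filter, Finset.mem_univ, true_and]
        exact ⟨x, hx, hxA⟩)
    obtain ⟨T, hT, hTmax⟩ := Finset.exists_max_image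
      (Finset.univ.filter (fun T : Finset α => IsPartialTransversal A T ∧ ∀ x ∈ T, x ∉ A i))
      Finset.card ⟨∅, by
        simp only [Finset.mem_filter, Finset.mem_univ, true_and]
        exact ⟨⟨fun s => i, fun x => absurd x.2 (Finset.notMem_empty _),
          fun x => absurd x.2 (Finset.notMem_empty _)⟩,
          by simp⟩⟩
    simp only [Finset.mem_filter, Finset.mem_univ, true_and] at hT hTmax
    obtain ⟨hTp, hTA⟩ := hT
    obtain ⟨g, hg, hgA⟩ := (isPT_iff _ T).1 hTp
    set TJ := T.filter (fun x => g x ∉ N) with hTJ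
    have hTJX : ∀ x ∈ TJ, x ∉ X := by
      intro x hx hxX
      have hx' := Finset.mem_filter.1 hx
      exact hout _ hx'.2 x hxX (hgA x hx'.1)
    have hdisj : Disjoint TJ (X.erase e) := by
      rw [Finset.disjoint_left]
      intro x hx hx2
      exact hTJX x hx (Finset.mem_erase.1 hx2).2
    have hcard : T.card ≤ (TJ ∪ X.erase e).card := by
      rw [Finset.card_union_of_disjoint hdisj, ← hcardE, hNeq]
      have h1 : (T.filter (fun x => g x ∈ N)).card + TJ.card = T.card := by
        rw [hTJ]
        convert Finset.card_filter_add_card_filter_not (s := T) (fun x => g x ∈ N)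
      have h2 : (T.filter (fun x => g x ∈ N)).card ≤ N.card :=
        Finset.card_le_card_of_injOn g (fun x hx => (Finset.mem_filter.1 hx).2)
          (hg.mono (by intro x hx; exact (Finset.mem_filter.1 hx).1))
      omega
    have hfN : ∀ x ∈ X.erase e, f x ∈ N := by
      intro x hx
      rw [← hNeq]
      exact Finset.mem_image_of_mem f hx
    have heT := H (TJ ∪ X.erase e) (by
      rw [isPT_iff]
      refine ⟨fun x => if x ∈ X then f x else g x, ?_, ?_⟩
      · intro x hx y hy hxy
        rcases Finset.mem_union.1 (Finset.mem_coe.1 hx) with hx | hx <;>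
          rcases Finset.mem_union.1 (Finset.mem_coe.1 hy) with hy | hy
        · simp only [hTJX x hx, hTJX y hy, if_false] at hxy
          exact hg (Finset.mem_filter.1 hx).1 (Finset.mem_filter.1 hy).1 hxy
        · simp only [hTJX x hx, (Finset.mem_erase.1 hy).2, if_false, if_true] at hxy
          exact absurd (hxy ▸ hfN y hy) (Finset.mem_filter.1 hx).2
        · simp only [hTJX y hy, (Finset.mem_erase.1 hx).2, if_false, if_true] at hxy
          exact absurd (hxy ▸ hfN x hx) (Finset.mem_filter.1 hy).2
        · simp only [(Finset.mem_erase.1 hx).2, (Finset.mem_erase.1 hy).2, if_true] at hxy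
          exact hinj (Finset.mem_erase.1 hx).2 (Finset.mem_erase.1 hy).2 hxy
      · intro x hx
        rcases Finset.mem_union.1 hx with hx | hx
        · simp only [hTJX x hx, if_false]
          exact hgA x (Finset.mem_filter.1 hx).1
        · have hx' := Finset.mem_erase.1 hx
          simp only [hx'.2, if_true]
          exact hmem x (hXS hx'.2) hx'.1) (by
      intro x hx
      rcases Finset.mem_union.1 hx with hx | hx
      · exact hTA x (Finset.mem_filter.1 hx).1
      · exact hout i hiN x (Finset.mem_erase.1 hx).2) (by
      intro T' h1 h2
      exact (hTmax T' ⟨h1, h2⟩).trans hcard)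
    rcases Finset.mem_union.1 heT with h1 | h1
    · exact hTJX e h1 heX
    · exact (Finset.mem_erase.1 h1).1 rfl
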